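/- Let k be a field, G a group, N a normal subgroup of G, n ≥ 1, and ρ : G →* GL(n,k) a representation of G on V = kⁿ. Let v ∈ V be fixed by every element of G, and suppose there is an N-invariant homogeneous polynomial f₀ of degree d > 0 with f₀(v) ≠ 0. Assume further there is a natural number D ≥ 1 with the following property: for every finite-dimensional k-linear representation W of G on which N acts trivially and every nonzero G-fixed vector w ∈ W, there exists a G-invariant homogeneous polynomial function on W of positive degree at most D that does not vanish at w. Then there exists a G-invariant homogeneous polynomial on V of positive degree at most d·D that does not vanish at v. -/

import Mathlib

/-!
Let `U` be the finite-dimensional space of `N`-invariant forms of degree `d` on `V`. Since `N` is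
normal, `G` acts on `U`, and `N` acts trivially. Evaluation `x ↦ (f ↦ f(x))` is a `G`-equivariant
map `V → U*`, homogeneous of degree `d`, which sends `v` to a `G`-fixed vector that is nonzero
because `f₀ ∈ U`. Apply the hypothesis to `U*` and pull the resulting invariant back along `V → U*`.
-/

open MvPolynomial

/-- The action of a matrix `M` on polynomial functions on `kⁿ`: the `k`-algebra substitution
sending the coordinate `xᵢ` to `∑ⱼ M i j • xⱼ`. Applied with `M = ρ(g)⁻¹`, this realises the
action `(g·f)(w) = f(ρ(g)⁻¹ w)`. -/
noncomputable def matrixSubst {k : Type*} [Field k] {n : ℕ}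
    (M : Matrix (Fin n) (Fin n) k) :
    MvPolynomial (Fin n) k →ₐ[k] MvPolynomial (Fin n) k :=
  MvPolynomial.aeval fun i => ∑ j, MvPolynomial.C (M i j) * MvPolynomial.X j

section MatrixSubst

variable {k : Type*} [Field k] {n : ℕ}

theorem aeval_matrixSubst {A : Type*} [CommSemiring A] [Algebra k A] (p : Fin n → A)
    (M : Matrix (Fin n) (Fin n) k) (f : MvPolynomial (Fin n) k) :
    aeval p (matrixSubst M f) = aeval (fun i => ∑ j, M i j • p j) f := by
  rw [matrixSubst, comp_aeval_apply]
  simp [Algebra.smul_def]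

theorem matrixSubst_one : matrixSubst (1 : Matrix (Fin n) (Fin n) k) = AlgHom.id k _ := by
  ext i : 1
  simp [matrixSubst, Matrix.one_apply]

theorem matrixSubst_mul (M P : Matrix (Fin n) (Fin n) k) :
    matrixSubst (M * P) = (matrixSubst P).comp (matrixSubst M) := by
  ext i : 1
  simp only [matrixSubst, AlgHom.comp_apply, aeval_X, map_sum, map_mul, algHom_C,
    algebraMap_eq, Matrix.mul_apply, Finset.sum_mul, Finset.mul_sum, mul_assoc]
  exact Finset.sum_comm

theorem eval_matrixSubst (M : Matrix (Fin n) (Fin n) k) (x : Fin n → k)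
    (f : MvPolynomial (Fin n) k) : eval x (matrixSubst M f) = eval (M.mulVec x) f :=
  aeval_matrixSubst x M f

theorem isHomogeneous_matrixSubst (M : Matrix (Fin n) (Fin n) k) {f : MvPolynomial (Fin n) k}
    {d : ℕ} (hf : f.IsHomogeneous d) : (matrixSubst M f).IsHomogeneous d := by
  have hlinear (i : Fin n) : (∑ j, C (M i j) * X j : MvPolynomial (Fin n) k).IsHomogeneous 1 :=
    IsHomogeneous.sum _ _ _ fun j _ => isHomogeneous_C_mul_X (M i j) j
  simpa only [matrixSubst, one_mul] using hf.aeval _ hlinear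

end MatrixSubst

section MatrixRep

variable {k G W ι : Type*} [CommSemiring k] [Group G] [AddCommMonoid W] [Module k W]
  [Fintype ι] [DecidableEq ι]

/-- The matrix form `G →* GL(ι, k)` of a representation on a free module `W` with basis `b`. -/
noncomputable def matrixRep (τ : Representation k G W) (b : Module.Basis ι k W) :
    G →* Matrix.GeneralLinearGroup ι k :=
  (Units.map (LinearMap.toMatrixAlgEquiv b : (W →ₗ[k] W) →* Matrix ι ι k)).comp τ.asGroupHom

variable (τ : Representation k G W) (b : Module.Basis ι k W)

theorem coe_matrixRep (g : G) :
    (matrixRep τ b g : Matrix ι ι k) = LinearMap.toMatrix b b (τ g) :=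
  rfl

theorem matrixRep_eq_one {g : G} (hg : τ g = 1) : matrixRep τ b g = 1 := by
  ext1
  rw [coe_matrixRep, hg, LinearMap.toMatrix_one, Units.val_one]

theorem matrixRep_mulVec_repr (g : G) (x : W) :
    (matrixRep τ b g : Matrix ι ι k).mulVec (b.repr x) = b.repr (τ g x) :=
  LinearMap.toMatrix_mulVec_repr b b (τ g) x

theorem coe_matrixRep_dual_inv (g : G) :
    (↑(matrixRep τ.dual b.dualBasis g)⁻¹ : Matrix ι ι k) =
      (LinearMap.toMatrix b b (τ g)).transpose := by
  ext i j
  rw [← map_inv, coe_matrixRep, Representation.dual_apply, inv_inv, Matrix.transpose_apply]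
  simp [LinearMap.toMatrix_apply, Module.Dual.transpose_apply]

end MatrixRep

section PolynomialRep

variable {k G : Type*} [Field k] [Group G] {n : ℕ}

/-- The representation of `G` on polynomial functions on `kⁿ` induced by `ρ`, namely
`(g·f)(x) = f(ρ(g)⁻¹x)`. -/
noncomputable def polynomialRep (ρ : G →* Matrix.GeneralLinearGroup (Fin n) k) :
    Representation k G (MvPolynomial (Fin n) k) where
  toFun g := (matrixSubst (↑(ρ g)⁻¹ : Matrix (Fin n) (Fin n) k)).toLinearMap
  map_one' := by
    rw [map_one, inv_one, Units.val_one, matrixSubst_one]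
    rfl
  map_mul' g h := by
    rw [map_mul, mul_inv_rev, Units.val_mul, matrixSubst_mul]
    rfl

variable (ρ : G →* Matrix.GeneralLinearGroup (Fin n) k)

theorem polynomialRep_apply (g : G) (f : MvPolynomial (Fin n) k) :
    polynomialRep ρ g f = matrixSubst (↑(ρ g)⁻¹ : Matrix (Fin n) (Fin n) k) f :=
  rfl

theorem eval_polynomialRep (g : G) (f : MvPolynomial (Fin n) k) (x : Fin n → k) :
    eval x (polynomialRep ρ g f) =
      eval ((↑(ρ g⁻¹) : Matrix (Fin n) (Fin n) k).mulVec x) f := by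
  rw [polynomialRep_apply, eval_matrixSubst, map_inv]

/-- The subrepresentation of `k[x₁, …, xₙ]` consisting of the `N`-invariant forms of degree `d`. -/
noncomputable def homogeneousInvariants (N : Subgroup G) [N.Normal] (d : ℕ) :
    Subrepresentation (polynomialRep ρ) where
  toSubmodule := homogeneousSubmodule (Fin n) k d ⊓
    Representation.invariants ((polynomialRep ρ).comp N.subtype)
  apply_mem_toSubmodule g _ hf :=
    ⟨isHomogeneous_matrixSubst _ hf.1, (polynomialRep ρ).le_comap_invariants N g hf.2⟩

variable {ρ} in
theorem mem_homogeneousInvariants {N : Subgroup G} [N.Normal] {d : ℕ}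
    {f : MvPolynomial (Fin n) k} :
    f ∈ (homogeneousInvariants ρ N d).toSubmodule ↔
      f.IsHomogeneous d ∧ ∀ g ∈ N, polynomialRep ρ g f = f := by
  simp [homogeneousInvariants, Representation.mem_invariants]

instance finite_homogeneousInvariants (N : Subgroup G) [N.Normal] (d : ℕ) :
    Module.Finite k (homogeneousInvariants ρ N d).toSubmodule :=
  have : Module.Finite k (homogeneousSubmodule (Fin n) k d) :=
    Module.Finite.iff_fg.mpr (homogeneousSubmodule_fg _ _ d)
  Submodule.finiteDimensional_of_le inf_le_left

theorem homogeneousInvariants_dual_eq_one {N : Subgroup G} [N.Normal] (d : ℕ) {g : G}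
    (hg : g ∈ N) : (homogeneousInvariants ρ N d).toRepresentation.dual g = 1 := by
  ext l f
  exact congrArg l (Subtype.ext ((mem_homogeneousInvariants.mp f.2).2 _ (N.inv_mem hg)))

end PolynomialRep

section EvalDual

variable {k σ : Type*} [CommSemiring k]

/-- Evaluation at `x` as a linear form on a space `U` of polynomials. As `x` varies, this is the
map `V → U*` along which invariants are pulled back. -/
noncomputable def evalDual (U : Submodule k (MvPolynomial σ k)) (x : σ → k) : Module.Dual k U :=
  (aeval x).toLinearMap ∘ₗ U.subtype

theorem evalDual_apply (U : Submodule k (MvPolynomial σ k)) (x : σ → k) (f : U) :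
    evalDual U x f = eval x (f : MvPolynomial σ k) :=
  rfl

theorem eval_aeval_basis {ι : Type*} [Finite ι] [DecidableEq ι]
    {U : Submodule k (MvPolynomial σ k)} (b : Module.Basis ι k U) (x : σ → k)
    (F : MvPolynomial ι k) :
    eval x (aeval (fun i => (b i : MvPolynomial σ k)) F) =
      eval (b.dualBasis.repr (evalDual U x)) F := by
  have hcoord : ⇑(b.dualBasis.repr (evalDual U x)) =
      fun i => eval x (b i : MvPolynomial σ k) :=
    funext fun i => by rw [Module.Basis.dualBasis_repr, evalDual_apply]
  rw [hcoord]
  exact comp_aeval_apply _ (aeval x) F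

end EvalDual

section Pullback

variable {k G : Type*} [Field k] [Group G] {n : ℕ}
  {ρ : G →* Matrix.GeneralLinearGroup (Fin n) k}

theorem dual_evalDual (U : Subrepresentation (polynomialRep ρ)) (g : G) (x : Fin n → k) :
    U.toRepresentation.dual g (evalDual U.toSubmodule x) =
      evalDual U.toSubmodule ((↑(ρ g) : Matrix (Fin n) (Fin n) k).mulVec x) := by
  ext f
  have heval := eval_polynomialRep ρ g⁻¹ f x
  rwa [inv_inv] at heval

theorem polynomialRep_basis {ι : Type*} [Fintype ι] [DecidableEq ι]
    {U : Subrepresentation (polynomialRep ρ)}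
    (b : Module.Basis ι k U.toSubmodule) (g : G) (i : ι) :
    polynomialRep ρ g (b i) = ∑ j,
      (↑(matrixRep U.toRepresentation.dual b.dualBasis g)⁻¹ : Matrix ι ι k) i j •
        (b j : MvPolynomial (Fin n) k) := by
  calc polynomialRep ρ g (b i)
      = (∑ j, b.repr (U.toRepresentation g (b i)) j • b j : U.toSubmodule) := by
        rw [b.sum_repr]
        rfl
    _ = _ := by
        simp only [Submodule.coe_sum, Submodule.coe_smul, coe_matrixRep_dual_inv,
          Matrix.transpose_apply, LinearMap.toMatrix_apply]

theorem polynomialRep_aeval_basis {m : ℕ} {U : Subrepresentation (polynomialRep ρ)}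
    (b : Module.Basis (Fin m) k U.toSubmodule) (g : G) (F : MvPolynomial (Fin m) k) :
    polynomialRep ρ g (aeval (fun i => (b i : MvPolynomial (Fin n) k)) F) =
      aeval (fun i => (b i : MvPolynomial (Fin n) k))
        (polynomialRep (matrixRep U.toRepresentation.dual b.dualBasis) g F) := by
  rw [polynomialRep_apply, comp_aeval_apply, polynomialRep_apply, aeval_matrixSubst]
  simp only [← polynomialRep_apply, polynomialRep_basis]

end Pullback

/-- Let `k` be a field, `G` a group, `N ⊴ G`, `n ≥ 1`, and `ρ : G →* GL(n,k)`
a representation of `G` on `V = kⁿ`. Let `v ∈ V` be fixed by every element of `G`, and suppose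
there is an `N`-invariant homogeneous polynomial `f₀` of degree `d > 0` with `f₀(v) ≠ 0`.
Assume further there is a natural number `D ≥ 1` such that: for every finite-dimensional
`k`-linear representation `W` of `G` on which `N` acts trivially and every nonzero `G`-fixed
vector `w ∈ W`, there exists a `G`-invariant homogeneous polynomial function on `W` of positive
degree at most `D` not vanishing at `w`. Then there exists a `G`-invariant homogeneous
polynomial on `V` of positive degree at most `d·D` not vanishing at `v`. -/
theorem exists_invariant_of_relative_invariant
    {k : Type*} [Field k] {G : Type*} [Group G] {n : ℕ} (hn : 1 ≤ n)
    (N : Subgroup G) (hNnormal : N.Normal)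
    (ρ : G →* Matrix.GeneralLinearGroup (Fin n) k)
    (v : Fin n → k)
    (hv : ∀ g : G, Matrix.mulVec (↑(ρ g) : Matrix (Fin n) (Fin n) k) v = v)
    (f₀ : MvPolynomial (Fin n) k) (d : ℕ) (hd : 0 < d)
    (hf₀hom : f₀.IsHomogeneous d)
    (hf₀inv : ∀ g ∈ N, matrixSubst (↑(ρ g)⁻¹ : Matrix (Fin n) (Fin n) k) f₀ = f₀)
    (hf₀v : MvPolynomial.eval v f₀ ≠ 0)
    (D : ℕ) (hD : 1 ≤ D)
    (hDprop : ∀ (m : ℕ) (σ : G →* Matrix.GeneralLinearGroup (Fin m) k),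
      (∀ g ∈ N, σ g = 1) →
      ∀ w : Fin m → k, w ≠ 0 →
        (∀ g : G, Matrix.mulVec (↑(σ g) : Matrix (Fin m) (Fin m) k) w = w) →
        ∃ (F : MvPolynomial (Fin m) k) (e : ℕ), 0 < e ∧ e ≤ D ∧ F.IsHomogeneous e ∧
          (∀ g : G, matrixSubst (↑(σ g)⁻¹ : Matrix (Fin m) (Fin m) k) F = F) ∧
          MvPolynomial.eval w F ≠ 0) :
    ∃ (F : MvPolynomial (Fin n) k) (e : ℕ), 0 < e ∧ e ≤ d * D ∧ F.IsHomogeneous e ∧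
      (∀ g : G, matrixSubst (↑(ρ g)⁻¹ : Matrix (Fin n) (Fin n) k) F = F) ∧
      MvPolynomial.eval v F ≠ 0 := by
  let U := homogeneousInvariants ρ N d
  let τ := U.toRepresentation
  let b := Module.finBasis k U.toSubmodule
  let ℓ := evalDual U.toSubmodule v
  have hℓ : ℓ ≠ 0 := fun h =>
    hf₀v (LinearMap.congr_fun h ⟨f₀, mem_homogeneousInvariants.mpr ⟨hf₀hom, hf₀inv⟩⟩)
  have hℓfixed (g : G) : τ.dual g ℓ = ℓ := by
    rw [dual_evalDual, hv]
  obtain ⟨F, e, he, heD, hFhom, hFinv, hFℓ⟩ := hDprop _ (matrixRep τ.dual b.dualBasis)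
    (fun g hg => matrixRep_eq_one _ _ (homogeneousInvariants_dual_eq_one ρ d hg))
    (b.dualBasis.repr ℓ) (by simpa using hℓ)
    (fun g => by rw [matrixRep_mulVec_repr, hℓfixed])
  refine ⟨aeval (fun i => (b i : MvPolynomial (Fin n) k)) F, d * e, Nat.mul_pos hd he,
    Nat.mul_le_mul_left d heD, ?_, fun g => ?_, ?_⟩
  · exact hFhom.aeval _ fun i => (mem_homogeneousInvariants.mp (b i).2).1
  · rw [← polynomialRep_apply, polynomialRep_aeval_basis, polynomialRep_apply, hFinv]
  · rwa [eval_aeval_basis]
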